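/- Given two Borel probability measures μ, ν on ℝ, there exist a Borel probability measure λ on ℝ and analytic functions ω₁, ω₂ : ℂ⁺ → ℂ⁺ such that F_λ(z) = F_μ(ω₁(z)) = F_ν(ω₂(z)) and F_λ(z) + z = ω₁(z) + ω₂(z) for all z ∈ ℂ⁺, and lim_{y→+∞} ω_j(iy)/(iy) = 1 for j = 1,2. Moreover, the pair (ω₁, ω₂) of analytic self-maps of ℂ⁺ satisfying F_μ(ω₁(z)) = F_ν(ω₂(z)) = ω₁(z) + ω₂(z) − z for all z ∈ ℂ⁺ is unique. -/

import Mathlib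

open Complex Filter Set Topology MeasureTheory

/-- The open upper half-plane `ℂ⁺ = {z : ℂ | Im z > 0}`. -/
def UHP : Set ℂ := {z : ℂ | 0 < z.im}

/-- The Cauchy transform `G_μ(z) = ∫ dμ(t)/(z − t)` of a measure `μ` on `ℝ`. -/
noncomputable def cauchyT (μ : Measure ℝ) (z : ℂ) : ℂ :=
  ∫ t, (z - (t : ℂ))⁻¹ ∂μ

/-- The reciprocal Cauchy transform `F_μ = 1/G_μ`. -/
noncomputable def Fmeas (μ : Measure ℝ) (z : ℂ) : ℂ := (cauchyT μ z)⁻¹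

lemma UHP_isOpen : IsOpen UHP := isOpen_lt continuous_const Complex.continuous_im

lemma mem_UHP {z : ℂ} : z ∈ UHP ↔ 0 < z.im := Iff.rfl

/-- the key algebraic identity -/
lemma normSq_sub_conj (a b : ℂ) :
    ‖a - (starRingEnd ℂ) b‖ ^ 2 = ‖a - b‖ ^ 2 + 4 * a.im * b.im := by
  rw [← Complex.normSq_eq_norm_sq, ← Complex.normSq_eq_norm_sq, Complex.normSq_apply,
    Complex.normSq_apply]
  simp
  ring

lemma sub_conj_ne {a b : ℂ} (ha : 0 < a.im) (hb : 0 < b.im) : a - (starRingEnd ℂ) b ≠ 0 := by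
  intro h
  have := congrArg Complex.im h
  simp at this
  linarith

/-- Cayley-type map is into the disc -/
lemma cayley_lt {a b : ℂ} (ha : 0 < a.im) (hb : 0 < b.im) :
    ‖(a - b) / (a - (starRingEnd ℂ) b)‖ < 1 := by
  have h0 := sub_conj_ne ha hb
  rw [norm_div, div_lt_one (norm_pos_iff.2 h0)]
  have := normSq_sub_conj a b
  have h1 : 0 < a.im * b.im := mul_pos ha hb
  exact lt_of_pow_lt_pow_left₀ 2 (norm_nonneg _) (by nlinarith)

/-- inverse Cayley map -/
lemma invcayley_im {ζ b : ℂ} (hζ : ‖ζ‖ < 1) (hb : 0 < b.im) :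
    0 < ((b - (starRingEnd ℂ) b * ζ) / (1 - ζ)).im := by
  have h1 : 1 - ζ ≠ 0 := by
    intro h
    have : ζ = 1 := by linear_combination -h
    rw [this] at hζ
    simp at hζ
  have hn : 0 < Complex.normSq (1 - ζ) := Complex.normSq_pos.2 h1
  have e : ((b - (starRingEnd ℂ) b * ζ) / (1 - ζ)).im
      = b.im * (1 - ‖ζ‖ ^ 2) / Complex.normSq (1 - ζ) := by
    rw [Complex.div_im, ← Complex.normSq_eq_norm_sq, Complex.normSq_apply ζ]
    field_simp
    simp
    ring
  rw [e]
  have : ‖ζ‖ ^ 2 < 1 := by nlinarith [norm_nonneg ζ]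
  have : 0 < 1 - ‖ζ‖ ^ 2 := by linarith
  positivity

lemma sp_strict {f : ℂ → ℂ} (hf : DifferentiableOn ℂ f UHP) (hm : MapsTo f UHP UHP)
    {z w : ℂ} (hz : z ∈ UHP) (hw : w ∈ UHP) :
    ‖f z - f w‖ ^ 2 * (z.im * w.im) ≤ ‖z - w‖ ^ 2 * ((f z).im * (f w).im) := by
  have hz' : 0 < z.im := hz
  have hw' : 0 < w.im := hw
  have hfz : 0 < (f z).im := hm hz
  have hfw : 0 < (f w).im := hm hw
  let φ : ℂ → ℂ := fun ζ => (w - (starRingEnd ℂ) w * ζ) / (1 - ζ)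
  let g : ℂ → ℂ := fun ζ => (f (φ ζ) - f w) / (f (φ ζ) - (starRingEnd ℂ) (f w))
  have hne : ∀ ζ ∈ Metric.ball (0:ℂ) 1, 1 - ζ ≠ 0 := by
    intro ζ hζ h
    have : ζ = 1 := by linear_combination -h
    rw [this] at hζ
    simp at hζ
  have hφm : MapsTo φ (Metric.ball 0 1) UHP := by
    intro ζ hζ
    exact invcayley_im (by simpa using hζ) hw'
  have hφd : DifferentiableOn ℂ φ (Metric.ball 0 1) := by
    apply DifferentiableOn.div (by fun_prop) (by fun_prop) hne
  have hfφ : DifferentiableOn ℂ (fun ζ => f (φ ζ)) (Metric.ball 0 1) := hf.comp hφd hφm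
  have hgd : DifferentiableOn ℂ g (Metric.ball 0 1) := by
    apply DifferentiableOn.div (hfφ.sub_const _) (hfφ.sub_const _)
    intro ζ hζ
    exact sub_conj_ne (hm (hφm hζ)) hfw
  have hg0 : g 0 = 0 := by simp [g, φ]
  have hgm : MapsTo g (Metric.ball 0 1) (Metric.closedBall 0 1) := by
    intro ζ hζ
    have := cayley_lt (hm (hφm hζ)) hfw
    simpa [g] using this.le
  have hc := cayley_lt hz' hw'
  have key := Complex.norm_le_norm_of_mapsTo_ball hgd hgm hg0 hc
  have hzw := sub_conj_ne hz' hw'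
  have hww : w - (starRingEnd ℂ) w ≠ 0 := sub_conj_ne hw' hw'
  have hφz : φ ((z - w) / (z - (starRingEnd ℂ) w)) = z := by
    simp only [φ]
    have : 1 - (z - w) / (z - (starRingEnd ℂ) w) ≠ 0 := hne _ (by simpa using hc)
    rw [div_eq_iff this]
    field_simp
    ring
  simp only [g, hφz] at key
  have hfzw := sub_conj_ne hfz hfw
  rw [norm_div, norm_div, div_le_div_iff₀ (norm_pos_iff.2 hfzw) (norm_pos_iff.2 hzw)] at key
  have k2 := pow_le_pow_left₀ (by positivity) key 2
  rw [mul_pow, mul_pow, normSq_sub_conj, normSq_sub_conj] at k2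
  nlinarith

lemma sp {f : ℂ → ℂ} (hf : DifferentiableOn ℂ f UHP) {c : ℝ} (hm : ∀ w ∈ UHP, c ≤ (f w).im)
    {z w : ℂ} (hz : z ∈ UHP) (hw : w ∈ UHP) :
    ‖f z - f w‖ ^ 2 * (z.im * w.im) ≤ ‖z - w‖ ^ 2 * (((f z).im - c) * ((f w).im - c)) := by
  have h : ∀ δ : ℝ, 0 < δ → ‖f z - f w‖ ^ 2 * (z.im * w.im) ≤
      ‖z - w‖ ^ 2 * (((f z).im - (c - δ)) * ((f w).im - (c - δ))) := by
    intro δ hδ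
    have := sp_strict (f := fun w => f w - Complex.I * ((c - δ : ℝ) : ℂ)) (hf.sub_const _)
      (by intro u hu
          have := hm u hu
          simp [UHP]
          linarith) hz hw
    simpa using this
  have hl : Tendsto (fun δ : ℝ => ‖z - w‖ ^ 2 * (((f z).im - (c - δ)) * ((f w).im - (c - δ))))
      (𝓝[>] 0) (𝓝 (‖z - w‖ ^ 2 * (((f z).im - c) * ((f w).im - c)))) := by
    have : Continuous (fun δ : ℝ =>
      ‖z - w‖ ^ 2 * (((f z).im - (c - δ)) * ((f w).im - (c - δ)))) := by fun_prop
    have := this.tendsto 0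
    simp only [sub_zero] at this
    exact this.mono_left nhdsWithin_le_nhds
  refine ge_of_tendsto hl ?_
  filter_upwards [self_mem_nhdsWithin] with δ hδ using h δ hδ

lemma fix_unique {f : ℂ → ℂ} (hf : DifferentiableOn ℂ f UHP) {c : ℝ} (hc : 0 < c)
    (hm : ∀ w ∈ UHP, c ≤ (f w).im) {z w : ℂ} (hz : z ∈ UHP) (hw : w ∈ UHP)
    (h1 : f z = z) (h2 : f w = w) : z = w := by
  have h := sp hf hm hz hw
  have a := hm z hz
  have b := hm w hw
  rw [h1] at a h
  rw [h2] at b h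
  by_contra hne
  have hp : 0 < ‖z - w‖ ^ 2 := by
    have := norm_pos_iff.2 (sub_ne_zero.2 hne)
    positivity
  have := le_of_mul_le_mul_left h hp
  nlinarith

lemma deriv_ne_one {f : ℂ → ℂ} (hf : DifferentiableOn ℂ f UHP) {c : ℝ} (hc : 0 < c)
    (hm : ∀ w ∈ UHP, c ≤ (f w).im) {w : ℂ} (hw : w ∈ UHP)
    (h2 : f w = w) {f' : ℂ} (hd : HasDerivAt f f' w) : f' ≠ 1 := by
  intro h1
  subst h1
  have hs := hasDerivAt_iff_tendsto_slope.1 hd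
  have hs2 : Tendsto (fun z => ‖slope f w z‖ ^ 2 * (z.im * w.im)) (𝓝[≠] w)
      (𝓝 (‖(1:ℂ)‖ ^ 2 * (w.im * w.im))) := by
    refine (hs.norm.pow 2).mul (Tendsto.mul ?_ tendsto_const_nhds)
    exact (Complex.continuous_im.tendsto w).mono_left nhdsWithin_le_nhds
  have hs3 : Tendsto (fun z => ((f z).im - c) * (w.im - c)) (𝓝[≠] w)
      (𝓝 (((f w).im - c) * (w.im - c))) := by
    have : Tendsto f (𝓝[≠] w) (𝓝 (f w)) := hd.continuousAt.mono_left nhdsWithin_le_nhds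
    have := (Complex.continuous_im.tendsto _).comp this
    exact (this.sub_const c).mul_const _
  have := le_of_tendsto_of_tendsto hs2 hs3 (by
    filter_upwards [self_mem_nhdsWithin,
      mem_nhdsWithin_of_mem_nhds (UHP_isOpen.mem_nhds hw)] with z hz hzU
    have h := sp hf hm hzU hw
    have hp : 0 < ‖z - w‖ := norm_pos_iff.2 (sub_ne_zero.2 hz)
    rw [slope_def_field, norm_div, div_pow, div_mul_eq_mul_div, div_le_iff₀ (by positivity)]
    calc _ ≤ _ := h
      _ = _ := by rw [h2]; ring)
  rw [h2] at this
  have hb := hm w hw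
  rw [h2] at hb
  simp at this
  nlinarith

section Cauchy

variable (μ : Measure ℝ) [IsProbabilityMeasure μ]

lemma sub_ofReal_ne {z : ℂ} (hz : z ∈ UHP) (t : ℝ) : z - (t : ℂ) ≠ 0 := by
  intro h
  have := congrArg Complex.im h
  simp at this
  exact (ne_of_gt hz) this

lemma im_le_norm_sub {z : ℂ} (t : ℝ) : z.im ≤ ‖z - (t : ℂ)‖ := by
  have := Complex.abs_im_le_norm (z - (t : ℂ))
  simp at this
  exact (le_abs_self _).trans this

lemma norm_inv_le {z : ℂ} (hz : z ∈ UHP) (t : ℝ) : ‖(z - (t : ℂ))⁻¹‖ ≤ z.im⁻¹ := by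
  rw [norm_inv]
  exact inv_anti₀ hz (im_le_norm_sub t)

lemma cont_inv {z : ℂ} (hz : z ∈ UHP) : Continuous (fun t : ℝ => (z - (t : ℂ))⁻¹) :=
  Continuous.inv₀ (by fun_prop) (sub_ofReal_ne hz)

lemma integrable_inv {z : ℂ} (hz : z ∈ UHP) : Integrable (fun t : ℝ => (z - (t : ℂ))⁻¹) μ :=
  Integrable.of_bound (cont_inv hz).aestronglyMeasurable z.im⁻¹
    (Eventually.of_forall (norm_inv_le hz))

lemma integrable_invsq {z : ℂ} (hz : z ∈ UHP) :
    Integrable (fun t : ℝ => ‖(z - (t : ℂ))⁻¹‖ ^ 2) μ := by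
  refine Integrable.of_bound ((cont_inv hz).norm.pow 2).aestronglyMeasurable (z.im⁻¹ ^ 2)
    (Eventually.of_forall fun t => ?_)
  rw [norm_pow, norm_norm]
  exact pow_le_pow_left₀ (norm_nonneg _) (norm_inv_le hz t) 2

lemma cauchyT_diff : DifferentiableOn ℂ (cauchyT μ) UHP := by
  intro z hz
  have hz' : 0 < z.im := hz
  refine DifferentiableAt.differentiableWithinAt ?_
  have hball : ∀ x ∈ Metric.ball z (z.im / 2), z.im / 2 ≤ x.im := by
    intro x hx
    have h1 := Complex.abs_im_le_norm (x - z)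
    rw [Metric.mem_ball, dist_eq_norm] at hx
    have := abs_le.1 (h1.trans hx.le)
    simp at this
    linarith
  have hU : ∀ x ∈ Metric.ball z (z.im / 2), x ∈ UHP := fun x hx =>
    lt_of_lt_of_le (by positivity) (hball x hx)
  have := hasDerivAt_integral_of_dominated_loc_of_deriv_le (μ := μ) (𝕜 := ℂ)
    (F := fun (x : ℂ) (t : ℝ) => (x - (t : ℂ))⁻¹)
    (F' := fun (x : ℂ) (t : ℝ) => -((x - (t : ℂ)) ^ 2)⁻¹) (x₀ := z)
    (s := Metric.ball z (z.im / 2)) (bound := fun _ => ((z.im / 2)⁻¹) ^ 2)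
    (Metric.ball_mem_nhds _ (by positivity))
    (by filter_upwards [UHP_isOpen.mem_nhds hz] with x hx
        exact (cont_inv hx).aestronglyMeasurable)
    (integrable_inv μ hz)
    (by
      have : Continuous (fun t : ℝ => -((z - (t : ℂ)) ^ 2)⁻¹) :=
        (Continuous.inv₀ (by fun_prop) (fun t => pow_ne_zero 2 (sub_ofReal_ne hz t))).neg
      exact this.aestronglyMeasurable)
    (Eventually.of_forall fun t x hx => by
      rw [norm_neg, ← inv_pow, norm_pow]
      refine pow_le_pow_left₀ (norm_nonneg _) ((norm_inv_le (hU x hx) t).trans ?_) 2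
      exact inv_anti₀ (by positivity) (hball x hx))
    (integrable_const _)
    (Eventually.of_forall fun t x hx => by
      have h := (hasDerivAt_id x).sub_const (t : ℂ)
      have := h.fun_inv (sub_ofReal_ne (hU x hx) t)
      simpa [neg_div] using! this)
  exact this.2.differentiableAt

lemma cauchyT_im {z : ℂ} (hz : z ∈ UHP) :
    (cauchyT μ z).im = - (z.im * ∫ t, ‖(z - (t : ℂ))⁻¹‖ ^ 2 ∂μ) := by
  have h : (cauchyT μ z).im = ∫ t, ((z - (t : ℂ))⁻¹).im ∂μ :=
    (Complex.imCLM.integral_comp_comm (integrable_inv μ hz)).symm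
  rw [h, ← integral_const_mul, ← integral_neg]
  congr 1
  ext t
  rw [Complex.inv_im, norm_inv, inv_pow, ← Complex.normSq_eq_norm_sq]
  simp
  ring

lemma norm_cauchyT_sq {z : ℂ} (hz : z ∈ UHP) :
    ‖cauchyT μ z‖ ^ 2 ≤ ∫ t, ‖(z - (t : ℂ))⁻¹‖ ^ 2 ∂μ := by
  have h1 : ‖cauchyT μ z‖ ≤ ∫ t, ‖(z - (t : ℂ))⁻¹‖ ∂μ := norm_integral_le_integral_norm _
  set m := ∫ t, ‖(z - (t : ℂ))⁻¹‖ ∂μ with hm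
  have h2 : 0 ≤ ∫ t, (‖(z - (t : ℂ))⁻¹‖ - m) ^ 2 ∂μ := integral_nonneg fun t => sq_nonneg _
  have h3 : ∫ t, (‖(z - (t : ℂ))⁻¹‖ - m) ^ 2 ∂μ
      = (∫ t, ‖(z - (t : ℂ))⁻¹‖ ^ 2 ∂μ) - m ^ 2 := by
    have : ∀ t : ℝ, (‖(z - (t : ℂ))⁻¹‖ - m) ^ 2
      = ‖(z - (t : ℂ))⁻¹‖ ^ 2 - 2 * m * ‖(z - (t : ℂ))⁻¹‖ + m ^ 2 := fun t => by ring
    simp_rw [this]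
    rw [integral_add, integral_sub, integral_const_mul, ← hm]
    · simp
      ring
    · exact integrable_invsq μ hz
    · exact (integrable_inv μ hz).norm.const_mul _
    · exact (integrable_invsq μ hz).sub ((integrable_inv μ hz).norm.const_mul _)
    · exact integrable_const _
  have h4 : ‖cauchyT μ z‖ ^ 2 ≤ m ^ 2 := pow_le_pow_left₀ (norm_nonneg _) h1 2
  linarith

lemma invsq_pos {z : ℂ} (hz : z ∈ UHP) : 0 < ∫ t, ‖(z - (t : ℂ))⁻¹‖ ^ 2 ∂μ := by
  rw [integral_pos_iff_support_of_nonneg (fun t => by positivity) (integrable_invsq μ hz)]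
  have : Function.support (fun t : ℝ => ‖(z - (t : ℂ))⁻¹‖ ^ 2) = univ := by
    ext t
    simp [sub_ofReal_ne hz t]
  rw [this]
  simp

lemma cauchyT_im_neg {z : ℂ} (hz : z ∈ UHP) : (cauchyT μ z).im < 0 := by
  rw [cauchyT_im μ hz]
  have : 0 < z.im := hz
  have := mul_pos this (invsq_pos μ hz)
  linarith

lemma cauchyT_ne {z : ℂ} (hz : z ∈ UHP) : cauchyT μ z ≠ 0 := by
  intro h
  have := cauchyT_im_neg μ hz
  rw [h] at this
  simp at this

lemma Fmeas_diff : DifferentiableOn ℂ (Fmeas μ) UHP :=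
  (cauchyT_diff μ).inv (fun _ hz => cauchyT_ne μ hz)

lemma Fmeas_im {z : ℂ} (hz : z ∈ UHP) : z.im ≤ (Fmeas μ z).im := by
  have hz' : 0 < z.im := hz
  have hn : 0 < ‖cauchyT μ z‖ ^ 2 := by
    have := norm_pos_iff.2 (cauchyT_ne μ hz)
    positivity
  rw [Fmeas, Complex.inv_im, cauchyT_im μ hz, Complex.normSq_eq_norm_sq, le_div_iff₀ hn]
  have := norm_cauchyT_sq μ hz
  nlinarith

lemma Fmeas_asymp {W : ℝ → ℂ} (hW : Tendsto (fun y : ℝ => W y / (Complex.I * y)) atTop (𝓝 1)) :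
    Tendsto (fun y : ℝ => Fmeas μ (W y) / (Complex.I * y)) atTop (𝓝 1) := by
  have hpos : ∀ᶠ y : ℝ in atTop, 0 < y := eventually_gt_atTop 0
  have hev : ∀ᶠ y : ℝ in atTop, y / 2 < (W y).im ∧ ‖W y‖ ≤ 2 * y := by
    have h1 : ∀ᶠ y : ℝ in atTop, ‖W y / (Complex.I * y) - 1‖ < 1 / 2 := by
      have := hW.sub_const 1
      rw [sub_self] at this
      have := this.norm
      rw [norm_zero] at this
      exact this.eventually_lt_const (by norm_num)
    filter_upwards [h1, hpos] with y hy hy0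
    have hne : (Complex.I * y : ℂ) ≠ 0 := by simp [hy0.ne']
    have hnn : ‖(Complex.I * y : ℂ)‖ = y := by simp [abs_of_pos hy0]
    have h2 : ‖W y - Complex.I * y‖ < y / 2 := by
      have e : W y - Complex.I * y = (W y / (Complex.I * y) - 1) * (Complex.I * y) := by
        rw [sub_mul, div_mul_cancel₀ _ hne, one_mul]
      rw [e, norm_mul, hnn]
      nlinarith
    constructor
    · have := abs_le.1 ((Complex.abs_im_le_norm (W y - Complex.I * y)).trans h2.le)
      have h3 := (Complex.abs_im_le_norm (W y - Complex.I * y)).trans_lt h2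
      have h4 := (abs_lt.1 h3).1
      simp at h4
      linarith
    · have := norm_add_le (W y - Complex.I * y) (Complex.I * y)
      rw [sub_add_cancel, hnn] at this
      linarith
  have hU : ∀ᶠ y : ℝ in atTop, W y ∈ UHP := by
    filter_upwards [hev, hpos] with y hy hy0
    exact lt_trans (by positivity) hy.1
  have hdct : Tendsto (fun y : ℝ => ∫ t, W y * (W y - (t : ℂ))⁻¹ ∂μ) atTop
      (𝓝 (∫ _t : ℝ, (1 : ℂ) ∂μ)) := by
    refine tendsto_integral_filter_of_dominated_convergence (fun _ => 4) ?_ ?_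
      (integrable_const _) ?_
    · filter_upwards [hU] with y hy
      exact ((cont_inv hy).const_mul _).aestronglyMeasurable
    · filter_upwards [hU, hev, hpos] with y hy h2 h0
      refine Eventually.of_forall fun t => ?_
      rw [norm_mul]
      calc ‖W y‖ * ‖(W y - (t : ℂ))⁻¹‖ ≤ (2 * y) * (y / 2)⁻¹ := by
            refine mul_le_mul h2.2 ((norm_inv_le hy t).trans ?_) (norm_nonneg _) (by positivity)
            exact inv_anti₀ (by positivity) h2.1.le
        _ = 4 := by field_simp; norm_num
    · refine Eventually.of_forall fun t => ?_
      have h1 : Tendsto (fun y : ℝ => (t : ℂ) / (Complex.I * y)) atTop (𝓝 0) := by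
        rw [tendsto_zero_iff_norm_tendsto_zero]
        have : Tendsto (fun y : ℝ => |t| / |y|) atTop (𝓝 0) :=
          tendsto_const_nhds.div_atTop (tendsto_abs_atTop_atTop)
        refine this.congr fun y => ?_
        simp
      have h2 := hW.div (hW.sub h1) (by simp)
      rw [sub_zero, div_one] at h2
      refine h2.congr' ?_
      filter_upwards [hpos, hU] with y hy hyU
      have hne : (Complex.I * y : ℂ) ≠ 0 := by simp [hy.ne']
      have := sub_ofReal_ne hyU t
      simp only [Pi.div_apply]
      rw [← sub_div, div_div_div_cancel_right₀ hne, div_eq_mul_inv]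
  simp only [integral_const, probReal_univ, one_smul] at hdct
  have h3 := hW.div hdct one_ne_zero
  rw [div_one] at h3
  refine h3.congr' ?_
  filter_upwards [hpos, hU] with y hy hyU
  have hne : (Complex.I * y : ℂ) ≠ 0 := by simp [hy.ne']
  have hW0 : W y ≠ 0 := by
    intro h
    rw [h] at hyU
    simp [UHP] at hyU
  have hG := cauchyT_ne μ hyU
  have e : ∫ t, W y * (W y - (t : ℂ))⁻¹ ∂μ = W y * cauchyT μ (W y) := by
    rw [integral_const_mul, cauchyT]
  simp only [Pi.div_apply, e, Fmeas]
  field_simp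

end Cauchy

section FixedPoint

/-- Edelstein-type fixed point for a map into a compact subset of the half-plane. -/
lemma fix_compact {f : ℂ → ℂ} (hf : DifferentiableOn ℂ f UHP) {c R : ℝ} (hc : 0 < c)
    (hm : ∀ w ∈ UHP, c ≤ (f w).im) (hR : ∀ w ∈ UHP, ‖f w‖ ≤ R) : ∃ w ∈ UHP, f w = w := by
  let K : Set ℂ := Metric.closedBall 0 R ∩ {w | c ≤ w.im}
  have hKc : IsCompact K :=
    (isCompact_closedBall 0 R).inter_right (isClosed_le continuous_const Complex.continuous_im)
  have hKU : K ⊆ UHP := fun w hw => lt_of_lt_of_le hc hw.2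
  have hfK : MapsTo f UHP K := fun w hw => ⟨by simpa using hR w hw, hm w hw⟩
  have hne : K.Nonempty := ⟨f Complex.I, hfK (by simp [UHP])⟩
  have hcont : ContinuousOn (fun w => ‖w - f w‖ ^ 2 / (w.im * (f w).im)) K := by
    have hfc : ContinuousOn f K := hf.continuousOn.mono hKU
    refine ContinuousOn.div ((continuousOn_id.sub hfc).norm.pow 2)
      (Complex.continuous_im.continuousOn.mul (Complex.continuous_im.comp_continuousOn hfc)) ?_
    intro w hw
    have h1 : 0 < w.im := hKU hw
    have h2 : 0 < (f w).im := hKU (hfK (hKU hw))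
    positivity
  obtain ⟨w, hw, hmin⟩ := hKc.exists_isMinOn hne hcont
  refine ⟨w, hKU hw, ?_⟩
  by_contra hwf
  have hwU := hKU hw
  have hfw := hfK hwU
  have h := hmin hfw
  simp only [mem_ofPred_eq] at h
  have hs := sp hf hm hwU (hKU hfw)
  have a1 : c ≤ w.im := hw.2
  have a2 : c ≤ (f w).im := hm _ hwU
  have a3 : c ≤ (f (f w)).im := hm _ (hKU hfw)
  have hp : 0 < ‖w - f w‖ ^ 2 := by
    have := norm_pos_iff.2 (sub_ne_zero.2 (Ne.symm hwf))
    positivity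
  have b1 : 0 < w.im := hc.trans_le a1
  have b2 : 0 < (f w).im := hc.trans_le a2
  have b3 : 0 < (f (f w)).im := hc.trans_le a3
  rw [div_le_div_iff₀ (by positivity) (by positivity)] at h
  have h' : ‖w - f w‖ ^ 2 * (f (f w)).im ≤ ‖f w - f (f w)‖ ^ 2 * w.im := by
    refine le_of_mul_le_mul_right ?_ b2
    calc _ = _ := by ring
      _ ≤ _ := h
      _ = _ := by ring
  have h2 : ‖w - f w‖ ^ 2 * ((f (f w)).im * (f w).im) ≤
      ‖w - f w‖ ^ 2 * (((f w).im - c) * ((f (f w)).im - c)) := by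
    calc _ = ‖w - f w‖ ^ 2 * (f (f w)).im * (f w).im := by ring
      _ ≤ ‖f w - f (f w)‖ ^ 2 * w.im * (f w).im := mul_le_mul_of_nonneg_right h' b2.le
      _ = ‖f w - f (f w)‖ ^ 2 * (w.im * (f w).im) := by ring
      _ ≤ _ := hs
  have h3 := le_of_mul_le_mul_left h2 hp
  nlinarith

/-- the perturbing Möbius map `u ↦ u/(1 - iεu)`. -/
noncomputable def mob (ε : ℝ) (u : ℂ) : ℂ := u / (1 - Complex.I * ε * u)

lemma mob_den_re {ε : ℝ} (hε : 0 < ε) {u : ℂ} (hu : 0 < u.im) :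
    1 < (1 - Complex.I * ε * u).re := by
  simp
  positivity

lemma mob_den_ne {ε : ℝ} (hε : 0 < ε) {u : ℂ} (hu : 0 < u.im) :
    1 - Complex.I * ε * u ≠ 0 := by
  intro h
  have := mob_den_re hε hu
  rw [h] at this
  simp at this
  linarith

lemma mob_im {ε : ℝ} (u : ℂ) :
    (mob ε u).im = (u.im + ε * ‖u‖ ^ 2) / ‖1 - Complex.I * ε * u‖ ^ 2 := by
  rw [mob, Complex.div_im, ← Complex.normSq_eq_norm_sq, ← Complex.normSq_eq_norm_sq,
    Complex.normSq_apply u, ← sub_div]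
  congr 1
  simp
  ring

lemma mob_norm {ε : ℝ} (hε : 0 < ε) {u : ℂ} (hu : 0 < u.im) : ‖mob ε u‖ ≤ 1 / ε := by
  rw [mob, norm_div, div_le_div_iff₀ (norm_pos_iff.2 (mob_den_ne hε hu)) hε, one_mul]
  have h1 : ‖Complex.I * ε * u‖ = ε * ‖u‖ := by simp [abs_of_pos hε]
  have : (‖u‖ * ε) ^ 2 ≤ ‖1 - Complex.I * ε * u‖ ^ 2 := by
    rw [mul_pow, ← Complex.normSq_eq_norm_sq, ← Complex.normSq_eq_norm_sq, Complex.normSq_apply,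
      Complex.normSq_apply]
    simp
    nlinarith [mul_pos hε hu]
  exact le_of_sq_le_sq this (norm_nonneg _)

/-- A self-map of the half-plane which is bounded below in imaginary part and strictly decreases
the imaginary part somewhere has a fixed point. -/
lemma fix_exists {f : ℂ → ℂ} (hf : DifferentiableOn ℂ f UHP) {c : ℝ} (hc : 0 < c)
    (hm : ∀ w ∈ UHP, c ≤ (f w).im) (hd : ∃ w ∈ UHP, (f w).im < w.im) : ∃ w ∈ UHP, f w = w := by
  let ε : ℕ → ℝ := fun n => 1 / ((n : ℝ) + 1)
  have hε : ∀ n, 0 < ε n := fun n => by positivity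
  have hε0 : Tendsto ε atTop (𝓝 0) := tendsto_one_div_add_atTop_nhds_zero_nat
  have hfU : ∀ w ∈ UHP, 0 < (f w).im := fun w hw => hc.trans_le (hm w hw)
  let g : ℕ → ℂ → ℂ := fun n w => mob (ε n) (f w)
  have hgd : ∀ n, DifferentiableOn ℂ (g n) UHP := fun n =>
    hf.div ((differentiableOn_const _).sub (hf.const_mul _))
      (fun w hw => mob_den_ne (hε n) (hfU w hw))
  have hgU : ∀ n, ∀ w ∈ UHP, g n w ∈ UHP := by
    intro n w hw
    have h1 := hfU w hw
    have h2 := norm_pos_iff.2 (mob_den_ne (hε n) h1)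
    have h3 := hε n
    change 0 < (mob (ε n) (f w)).im
    rw [mob_im]
    positivity
  -- uniform lower bound for fixed `n`
  have hglow : ∀ n, ∃ δ > 0, ∀ w ∈ UHP, δ ≤ (g n w).im := by
    intro n
    have h3 := hε n
    refine ⟨ε n / (1 / c + ε n) ^ 2, by positivity, fun w hw => ?_⟩
    have h1 := hfU w hw
    have h2 := norm_pos_iff.2 (mob_den_ne h3 h1)
    change _ ≤ (mob (ε n) (f w)).im
    have h4 : c ≤ ‖f w‖ := (hm w hw).trans ((le_abs_self _).trans (Complex.abs_im_le_norm _))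
    have h5 : ‖1 - Complex.I * ε n * f w‖ ≤ (1 / c + ε n) * ‖f w‖ := by
      have : ‖1 - Complex.I * ε n * f w‖ ≤ 1 + ε n * ‖f w‖ := by
        refine (norm_sub_le _ _).trans ?_
        simp [abs_of_pos h3]
      have h6 : 1 ≤ 1 / c * ‖f w‖ := by
        rw [one_div, ← div_eq_inv_mul, le_div_iff₀ hc]
        linarith
      linarith
    rw [mob_im, div_le_div_iff₀ (by positivity) (by positivity)]
    have h6 := pow_le_pow_left₀ h2.le h5 2
    calc ε n * ‖1 - Complex.I * ε n * f w‖ ^ 2 ≤ ε n * ((1 / c + ε n) * ‖f w‖) ^ 2 := by gcongr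
      _ = (ε n * ‖f w‖ ^ 2) * (1 / c + ε n) ^ 2 := by ring
      _ ≤ _ := by gcongr; linarith
  have hfix : ∀ n, ∃ w ∈ UHP, g n w = w := by
    intro n
    obtain ⟨δ, hδ, h⟩ := hglow n
    exact fix_compact (hgd n) hδ h (fun w hw => mob_norm (hε n) (hfU w hw))
  choose w hwU hwf using hfix
  have hglim : ∀ u ∈ UHP, Tendsto (fun n => g n u) atTop (𝓝 (f u)) := by
    intro u hu
    have h1 : Tendsto (fun n => 1 - Complex.I * (ε n : ℂ) * f u) atTop (𝓝 1) := by
      have : Tendsto (fun n => ((ε n : ℝ) : ℂ)) atTop (𝓝 ((0 : ℝ) : ℂ)) :=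
        (Complex.continuous_ofReal.tendsto 0).comp hε0
      have := ((this.const_mul Complex.I).mul_const (f u)).const_sub 1
      simpa using this
    have := (tendsto_const_nhds (x := f u)).div h1 one_ne_zero
    rw [div_one] at this
    exact this
  by_cases hbd : Tendsto (fun n => ‖w n‖) atTop atTop
  · exfalso
    obtain ⟨u, hu, hlt⟩ := hd
    have hu' : 0 < u.im := hu
    have hwinf : Tendsto w atTop (Bornology.cobounded ℂ) := tendsto_norm_atTop_iff_cobounded.1 hbd
    have hinv : Tendsto (fun n => (w n)⁻¹) atTop (𝓝 0) := tendsto_inv₀_cobounded.comp hwinf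
    have hl1 : Tendsto (fun n => ‖g n u * (w n)⁻¹ - 1‖ ^ 2 * u.im) atTop (𝓝 (u.im)) := by
      have := (((((hglim u hu).mul hinv).sub_const 1).norm).pow 2).mul_const u.im
      simpa using this
    have hl2 : Tendsto (fun n => ‖u * (w n)⁻¹ - 1‖ ^ 2 * (g n u).im) atTop (𝓝 ((f u).im)) := by
      have h2 := (Complex.continuous_im.tendsto _).comp (hglim u hu)
      have := (((((tendsto_const_nhds (x := u)).mul hinv).sub_const 1).norm).pow 2).mul h2
      simpa using this
    have := le_of_tendsto_of_tendsto' hl1 hl2 (fun n => by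
      have h := sp_strict (hgd n) (hgU n) hu (hwU n)
      rw [hwf n] at h
      have hwi : 0 < (w n).im := hwU n
      have hw0 : w n ≠ 0 := by
        intro h0
        rw [h0] at hwi
        simp at hwi
      have e : ∀ v : ℂ, ‖v * (w n)⁻¹ - 1‖ ^ 2 = ‖v - w n‖ ^ 2 / ‖w n‖ ^ 2 := by
        intro v
        rw [← div_pow, ← norm_div, sub_div, div_self hw0, div_eq_mul_inv]
      rw [e, e, div_mul_eq_mul_div, div_mul_eq_mul_div]
      refine div_le_div_of_nonneg_right ?_ (by positivity)
      refine le_of_mul_le_mul_right ?_ hwi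
      calc _ = _ := by ring
        _ ≤ _ := h
        _ = _ := by ring)
    linarith
  · -- a bounded subsequence
    rw [tendsto_atTop] at hbd
    push Not at hbd
    obtain ⟨R, hR⟩ := hbd
    have hfreq : ∃ᶠ n in atTop, ‖w n‖ < R := by
      refine hR.mono ?_
      intro n hn
      exact hn
    have hRpos : 0 < R := by
      obtain ⟨n, hn⟩ := hfreq.exists
      exact (norm_nonneg _).trans_lt hn
    have hsmall : ∀ᶠ n in atTop, ε n * R < 1 / 2 := by
      have := hε0.mul_const R
      rw [zero_mul] at this
      exact this.eventually_lt_const (by norm_num)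
    let K : Set ℂ := Metric.closedBall 0 R ∩ {w | c / 4 ≤ w.im}
    have hKc : IsCompact K :=
      (isCompact_closedBall 0 R).inter_right (isClosed_le continuous_const Complex.continuous_im)
    have hfreq2 : ∃ᶠ n in atTop, w n ∈ K := by
      refine (hfreq.and_eventually hsmall).mono ?_
      rintro n ⟨h1, h2⟩
      refine ⟨by simpa using h1.le, ?_⟩
      change c / 4 ≤ (w n).im
      have h3 := hε n
      have hu := hfU _ (hwU n)
      have hden := mob_den_ne h3 hu
      have hden' := norm_pos_iff.2 hden
      have e1 : w n * (1 - Complex.I * ε n * f (w n)) = f (w n) := by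
        have := hwf n
        simp only [g, mob] at this
        rw [div_eq_iff hden] at this
        exact this.symm
      -- norm of `f (w n)`
      have e2 : ‖f (w n)‖ ≤ R + (1 / 2) * ‖f (w n)‖ := by
        have : f (w n) = w n - (ε n * w n) * (Complex.I * f (w n)) := by
          rw [← sub_eq_zero]
          linear_combination -e1
        calc ‖f (w n)‖ = ‖w n - (ε n * w n) * (Complex.I * f (w n))‖ := by rw [← this]
          _ ≤ ‖w n‖ + ‖(ε n * w n) * (Complex.I * f (w n))‖ := norm_sub_le _ _
          _ = ‖w n‖ + ε n * ‖w n‖ * ‖f (w n)‖ := by simp [abs_of_pos h3]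
          _ ≤ R + (1 / 2) * ‖f (w n)‖ := by
            have : ε n * ‖w n‖ ≤ 1 / 2 := by nlinarith
            have := mul_le_mul_of_nonneg_right this (norm_nonneg (f (w n)))
            linarith
      have e3 : ‖1 - Complex.I * ε n * f (w n)‖ ≤ 2 := by
        refine (norm_sub_le _ _).trans ?_
        have : ‖Complex.I * ε n * f (w n)‖ = ε n * ‖f (w n)‖ := by simp [abs_of_pos h3]
        rw [this, norm_one]
        nlinarith
      have e4 := mob_im (ε := ε n) (f (w n))
      rw [show mob (ε n) (f (w n)) = w n from hwf n] at e4
      rw [e4, div_le_div_iff₀ (by norm_num) (by positivity)]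
      have e5 := hm _ (hwU n)
      have e6 := pow_le_pow_left₀ hden'.le e3 2
      have e7 : 0 ≤ ε n * ‖f (w n)‖ ^ 2 := by positivity
      nlinarith
    obtain ⟨a, haK, φ, hφ, hlim⟩ := hKc.tendsto_subseq' hfreq2
    have haU : a ∈ UHP := lt_of_lt_of_le (show (0 : ℝ) < c / 4 by positivity) haK.2
    refine ⟨a, haU, ?_⟩
    have hfa : Tendsto (fun n => f (w (φ n))) atTop (𝓝 (f a)) :=
      ((hf.continuousOn.continuousAt (UHP_isOpen.mem_nhds haU)).tendsto).comp hlim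
    have hεφ : Tendsto (fun n => ((ε (φ n) : ℝ) : ℂ)) atTop (𝓝 ((0 : ℝ) : ℂ)) :=
      (Complex.continuous_ofReal.tendsto 0).comp (hε0.comp hφ.tendsto_atTop)
    have h1 := (hlim.mul (((hεφ.const_mul Complex.I).mul hfa).const_sub 1))
    have h2 : Tendsto (fun n => f (w (φ n))) atTop (𝓝 (a * (1 - Complex.I * ((0:ℝ):ℂ) * f a))) := by
      refine h1.congr fun n => ?_
      have hden := mob_den_ne (hε (φ n)) (hfU _ (hwU (φ n)))
      have := hwf (φ n)
      simp only [g, mob] at this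
      rw [div_eq_iff hden] at this
      exact this.symm
    have := tendsto_nhds_unique hfa h2
    simpa using this

lemma norm_mul_inv_sub_one {a : ℂ} (ha : a ≠ 0) (v : ℂ) :
    ‖v * a⁻¹ - 1‖ ^ 2 = ‖v - a‖ ^ 2 / ‖a‖ ^ 2 := by
  rw [← div_pow, ← norm_div, sub_div, div_self ha, div_eq_mul_inv]

lemma tendsto_ratio {a : ℝ → ℂ} (ha : Tendsto a atTop (Bornology.cobounded ℂ)) (p : ℂ) :
    Tendsto (fun y => ‖p * (a y)⁻¹ - 1‖ ^ 2) atTop (𝓝 1) := by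
  have hinv : Tendsto (fun n => (a n)⁻¹) atTop (𝓝 0) := tendsto_inv₀_cobounded.comp ha
  have := ((((tendsto_const_nhds (x := p)).mul hinv).sub_const 1).norm).pow 2
  simpa using this

/-- A composition of two self-maps of the half-plane, whose Julia constants at infinity have
product less than one, decreases the imaginary part somewhere. -/
lemma comp_dec {A B : ℂ → ℂ} (hA : DifferentiableOn ℂ A UHP) (hB : DifferentiableOn ℂ B UHP)
    {c : ℝ} (hc : 0 < c) (hAm : ∀ w ∈ UHP, c ≤ (A w).im) (hBm : ∀ w ∈ UHP, c ≤ (B w).im)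
    {u v : ℂ} (hu : u ∈ UHP) (hv : v ∈ UHP) (hK : (A u).im * (B v).im < u.im * v.im) :
    ∃ w ∈ UHP, (A (B w)).im < w.im := by
  by_contra! hcon
  have hAU : MapsTo A UHP UHP := fun w hw => hc.trans_le (hAm w hw)
  have hBU : MapsTo B UHP UHP := fun w hw => hc.trans_le (hBm w hw)
  have hu' : 0 < u.im := hu
  have hv' : 0 < v.im := hv
  let i : ℝ → ℂ := fun y => Complex.I * y
  let b : ℝ → ℂ := fun y => B (i y)
  let a : ℝ → ℂ := fun y => A (b y)
  have hi : ∀ y : ℝ, 0 < y → i y ∈ UHP := fun y hy => by simpa [i, UHP] using hy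
  have hb : ∀ y : ℝ, 0 < y → b y ∈ UHP := fun y hy => hBU (hi y hy)
  have hya : ∀ y : ℝ, 0 < y → y ≤ (a y).im := fun y hy => by
    have := hcon _ (hi y hy)
    simpa [i] using this
  have hia : Tendsto i atTop (Bornology.cobounded ℂ) := by
    rw [← tendsto_norm_atTop_iff_cobounded]
    refine tendsto_abs_atTop_atTop.congr fun y => ?_
    simp [i]
  have hna : ∀ y : ℝ, 0 < y → y ≤ ‖a y‖ := fun y hy =>
    (hya y hy).trans ((le_abs_self _).trans (Complex.abs_im_le_norm _))
  have haa : Tendsto a atTop (Bornology.cobounded ℂ) := by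
    rw [← tendsto_norm_atTop_iff_cobounded]
    refine tendsto_atTop_mono' _ ?_ tendsto_id
    filter_upwards [eventually_gt_atTop 0] with y hy using hna y hy
  have hba : Tendsto b atTop (Bornology.cobounded ℂ) := by
    rw [← tendsto_norm_atTop_iff_cobounded]
    by_contra hbd
    rw [tendsto_atTop] at hbd
    push Not at hbd
    obtain ⟨R, hR⟩ := hbd
    let K : Set ℂ := Metric.closedBall 0 R ∩ {w | c ≤ w.im}
    have hKc : IsCompact K :=
      (isCompact_closedBall 0 R).inter_right (isClosed_le continuous_const Complex.continuous_im)
    have hKU : K ⊆ UHP := fun w hw => lt_of_lt_of_le hc hw.2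
    obtain ⟨M, hM⟩ := hKc.exists_bound_of_continuousOn (hA.continuousOn.mono hKU)
    obtain ⟨y, hy1, hy2⟩ := (hR.and_eventually (eventually_gt_atTop (max M 0))).exists
    have hy0 : 0 < y := (le_max_right _ _).trans_lt hy2
    have h1 : b y ∈ K := ⟨by simpa using hy1.le, hBm _ (hi y hy0)⟩
    have h2 := hM _ h1
    have h3 := hna y hy0
    have h4 := (le_max_left M 0).trans_lt hy2
    have h5 : ‖a y‖ ≤ M := h2
    linarith
  have hl1 := ((tendsto_ratio haa (A u)).mul (tendsto_ratio hba (B v))).mul_const (u.im * v.im)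
  have hl2 := ((tendsto_ratio hba u).mul (tendsto_ratio hia v)).mul_const ((A u).im * (B v).im)
  have := le_of_tendsto_of_tendsto hl1 hl2 (by
    filter_upwards [eventually_gt_atTop 0] with y hy
    have h1 := sp_strict hA hAU hu (hb y hy)
    have h2 := sp_strict hB hBU hv (hi y hy)
    have hbi : 0 < (b y).im := hb y hy
    have hai : 0 < (a y).im := hy.trans_le (hya y hy)
    have hne : ∀ {p : ℂ}, 0 < p.im → p ≠ 0 := by
      intro p hp h0
      rw [h0] at hp
      simp at hp
    have hb0 := hne hbi
    have ha0 := hne hai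
    have hi0 := hne (hi y hy)
    rw [norm_mul_inv_sub_one ha0, norm_mul_inv_sub_one hb0, norm_mul_inv_sub_one hb0,
      norm_mul_inv_sub_one hi0]
    have hniy : ‖i y‖ = y := by simp [i, abs_of_pos hy]
    have hiim : (i y).im = y := by simp [i]
    rw [hiim] at h2
    rw [hniy]
    have hAu : 0 < (A u).im := hAU hu
    have hBv : 0 < (B v).im := hBU hv
    change ‖A u - a y‖ ^ 2 * (u.im * (b y).im) ≤ ‖u - b y‖ ^ 2 * ((A u).im * (a y).im) at h1
    change ‖B v - b y‖ ^ 2 * (v.im * y) ≤ ‖v - i y‖ ^ 2 * ((B v).im * (b y).im) at h2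
    have h3 := mul_le_mul h1 h2 (by positivity) (by positivity)
    have h4 : ‖A u - a y‖ ^ 2 * ‖B v - b y‖ ^ 2 * (u.im * v.im) * y ≤
        ‖u - b y‖ ^ 2 * ‖v - i y‖ ^ 2 * ((A u).im * (B v).im) * (a y).im := by
      refine le_of_mul_le_mul_right ?_ hbi
      calc _ = _ := by ring
        _ ≤ _ := h3
        _ = _ := by ring
    have h5 : (a y).im * y ≤ ‖a y‖ ^ 2 := by
      have e1 : (a y).im ≤ ‖a y‖ := (le_abs_self _).trans (Complex.abs_im_le_norm _)
      have e2 := hna y hy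
      nlinarith
    have hA0 := norm_pos_iff.2 ha0
    have hB0 := norm_pos_iff.2 hb0
    have h6 : ‖A u - a y‖ ^ 2 * ‖B v - b y‖ ^ 2 * (u.im * v.im) * y ^ 2 ≤
        ‖u - b y‖ ^ 2 * ‖v - i y‖ ^ 2 * ((A u).im * (B v).im) * ‖a y‖ ^ 2 := by
      calc _ = (‖A u - a y‖ ^ 2 * ‖B v - b y‖ ^ 2 * (u.im * v.im) * y) * y := by ring
        _ ≤ (‖u - b y‖ ^ 2 * ‖v - i y‖ ^ 2 * ((A u).im * (B v).im) * (a y).im) * y :=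
          mul_le_mul_of_nonneg_right h4 hy.le
        _ = ‖u - b y‖ ^ 2 * ‖v - i y‖ ^ 2 * ((A u).im * (B v).im) * ((a y).im * y) := by ring
        _ ≤ _ := mul_le_mul_of_nonneg_left h5 (by positivity)
    rw [div_mul_div_comm, div_mul_div_comm, div_mul_eq_mul_div, div_mul_eq_mul_div,
      div_le_div_iff₀ (by positivity) (by positivity)]
    calc _ = (‖A u - a y‖ ^ 2 * ‖B v - b y‖ ^ 2 * (u.im * v.im) * y ^ 2) * ‖b y‖ ^ 2 := by ring
      _ ≤ (‖u - b y‖ ^ 2 * ‖v - i y‖ ^ 2 * ((A u).im * (B v).im) * ‖a y‖ ^ 2) * ‖b y‖ ^ 2 :=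
        mul_le_mul_of_nonneg_right h6 (by positivity)
      _ = _ := by ring)
  simp only [one_mul] at this
  linarith

end FixedPoint

section Subordination

/-- The map `w ↦ z + H_ν(z + H_μ(w))` with `H = F - id`. -/
noncomputable def subf (μ ν : Measure ℝ) (z w : ℂ) : ℂ :=
  z + (Fmeas ν (z + (Fmeas μ w - w)) - (z + (Fmeas μ w - w)))

variable (μ ν : Measure ℝ) [IsProbabilityMeasure μ] [IsProbabilityMeasure ν]

lemma inner_im {z w : ℂ} (hw : w ∈ UHP) : z.im ≤ (z + (Fmeas μ w - w)).im := by
  have := Fmeas_im μ hw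
  simp
  linarith

lemma inner_mem {z w : ℂ} (hz : z ∈ UHP) (hw : w ∈ UHP) : z + (Fmeas μ w - w) ∈ UHP :=
  lt_of_lt_of_le (show 0 < z.im from hz) (inner_im μ hw)

lemma subf_im {z : ℂ} (hz : z ∈ UHP) : ∀ w ∈ UHP, z.im ≤ (subf μ ν z w).im := by
  intro w hw
  have := Fmeas_im ν (inner_mem μ hz hw)
  rw [subf, Complex.add_im, Complex.sub_im]
  linarith

lemma subf_diff {z : ℂ} (hz : z ∈ UHP) : DifferentiableOn ℂ (subf μ ν z) UHP := by
  have h1 : DifferentiableOn ℂ (fun w => z + (Fmeas μ w - w)) UHP :=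
    ((Fmeas_diff μ).sub differentiableOn_id).const_add z
  have h2 : DifferentiableOn ℂ (fun w => Fmeas ν (z + (Fmeas μ w - w))) UHP :=
    (Fmeas_diff ν).comp h1 (fun w hw => inner_mem μ hz hw)
  exact (h2.sub h1).const_add z

lemma tendsto_const_div_Iy (z : ℂ) :
    Tendsto (fun y : ℝ => z / (Complex.I * y)) atTop (𝓝 0) := by
  rw [tendsto_zero_iff_norm_tendsto_zero]
  have : Tendsto (fun y : ℝ => ‖z‖ / |y|) atTop (𝓝 0) :=
    tendsto_const_nhds.div_atTop (tendsto_abs_atTop_atTop)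
  refine this.congr fun y => ?_
  simp

lemma tendsto_Iy_div_Iy :
    Tendsto (fun y : ℝ => (Complex.I * y) / (Complex.I * y)) atTop (𝓝 1) := by
  refine (tendsto_const_nhds (x := (1:ℂ))).congr' ?_
  filter_upwards [eventually_gt_atTop 0] with y hy
  have hne : (Complex.I * y : ℂ) ≠ 0 := by simp [hy.ne']
  rw [div_self hne]

/-- Asymptotics of `subf` along the imaginary axis, with `z = Z y`, `w = W y`. -/
lemma subf_asymp {Z W : ℝ → ℂ} {a : ℂ}
    (hZ : Tendsto (fun y : ℝ => Z y / (Complex.I * y)) atTop (𝓝 a))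
    (hin : Tendsto (fun y : ℝ => (Z y + (Fmeas μ (W y) - W y)) / (Complex.I * y)) atTop (𝓝 1)) :
    Tendsto (fun y : ℝ => subf μ ν (Z y) (W y) / (Complex.I * y)) atTop (𝓝 a) := by
  have h := hZ.add ((Fmeas_asymp ν hin).sub hin)
  rw [sub_self, add_zero] at h
  refine h.congr fun y => ?_
  rw [subf, ← sub_div, ← add_div]

/-- `Im (z + H(iy)) / y → 0`. -/
lemma inner_small (z : ℂ) : ∀ᶠ y : ℝ in atTop,
    (z + (Fmeas μ (Complex.I * y) - Complex.I * y)).im < y := by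
  have h1 : Tendsto (fun y : ℝ => (z + (Fmeas μ (Complex.I * y) - Complex.I * y))
      / (Complex.I * y)) atTop (𝓝 0) := by
    have := (tendsto_const_div_Iy z).add ((Fmeas_asymp μ tendsto_Iy_div_Iy).sub tendsto_Iy_div_Iy)
    rw [sub_self, add_zero] at this
    refine this.congr fun y => ?_
    rw [← sub_div, ← add_div]
  have h2 := h1.norm
  rw [norm_zero] at h2
  filter_upwards [h2.eventually_lt_const one_pos, eventually_gt_atTop 0] with y hy hy0
  rw [norm_div, div_lt_one (by simp [hy0.ne'])] at hy
  have : ‖(Complex.I * y : ℂ)‖ = y := by simp [abs_of_pos hy0]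
  rw [this] at hy
  exact ((le_abs_self _).trans (Complex.abs_im_le_norm _)).trans_lt hy

lemma exists_fix {z : ℂ} (hz : z ∈ UHP) : ∃ w ∈ UHP, subf μ ν z w = w := by
  have hz' : 0 < z.im := hz
  refine fix_exists (subf_diff μ ν hz) hz' (subf_im μ ν hz) ?_
  have hd : ∀ (ρ : Measure ℝ) [IsProbabilityMeasure ρ],
      DifferentiableOn ℂ (fun w => z + (Fmeas ρ w - w)) UHP := fun ρ _ =>
    ((Fmeas_diff ρ).sub differentiableOn_id).const_add z
  obtain ⟨y, hy1, hy2, hy0⟩ := ((inner_small ν z).and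
    ((inner_small μ z).and (eventually_gt_atTop 0))).exists
  have hi : Complex.I * (y : ℂ) ∈ UHP := by simpa [UHP] using hy0
  refine comp_dec (A := fun w => z + (Fmeas ν w - w)) (B := fun w => z + (Fmeas μ w - w))
    (hd ν) (hd μ) hz' (fun w hw => inner_im ν hw) (fun w hw => inner_im μ hw) hi hi ?_
  have e : (Complex.I * (y : ℂ)).im = y := by simp
  rw [e]
  exact mul_lt_mul'' hy1 hy2 (hz'.le.trans (inner_im ν hi)) (hz'.le.trans (inner_im μ hi))

/-- The subordination function. -/
noncomputable def omegaFix (z : ℂ) : ℂ := by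
  classical
  exact if hz : z ∈ UHP then (exists_fix μ ν hz).choose else 0

lemma omegaFix_mem {z : ℂ} (hz : z ∈ UHP) : omegaFix μ ν z ∈ UHP := by
  rw [omegaFix, dif_pos hz]
  exact (exists_fix μ ν hz).choose_spec.1

lemma omegaFix_fix {z : ℂ} (hz : z ∈ UHP) : subf μ ν z (omegaFix μ ν z) = omegaFix μ ν z := by
  rw [omegaFix, dif_pos hz]
  exact (exists_fix μ ν hz).choose_spec.2

lemma omegaFix_unique {z w : ℂ} (hz : z ∈ UHP) (hw : w ∈ UHP) (h : subf μ ν z w = w) :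
    omegaFix μ ν z = w :=
  fix_unique (subf_diff μ ν hz) hz (subf_im μ ν hz) (omegaFix_mem μ ν hz) hw
    (omegaFix_fix μ ν hz) h

lemma omegaFix_diff : DifferentiableOn ℂ (omegaFix μ ν) UHP := by
  intro z hz
  refine DifferentiableAt.differentiableWithinAt ?_
  set w := omegaFix μ ν z with hwdef
  have hw : w ∈ UHP := omegaFix_mem μ ν hz
  let Φ : ℂ × ℂ → ℂ := fun p => subf μ ν p.1 p.2 - p.2
  have hanF : ∀ (ρ : Measure ℝ) [IsProbabilityMeasure ρ] {u : ℂ}, u ∈ UHP →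
      AnalyticAt ℂ (Fmeas ρ) u := fun ρ _ u hu =>
    (Fmeas_diff ρ).analyticAt (UHP_isOpen.mem_nhds hu)
  have han : AnalyticAt ℂ Φ (z, w) := by
    have h1 : AnalyticAt ℂ (fun p : ℂ × ℂ => p.1 + (Fmeas μ p.2 - p.2)) (z, w) :=
      analyticAt_fst.add (((hanF μ hw).comp_of_eq analyticAt_snd rfl).sub analyticAt_snd)
    have h2 : AnalyticAt ℂ (fun p : ℂ × ℂ => Fmeas ν (p.1 + (Fmeas μ p.2 - p.2))) (z, w) :=
      (hanF ν (inner_mem μ hz hw)).comp_of_eq h1 rfl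
    exact (analyticAt_fst.add (h2.sub h1)).sub analyticAt_snd
  have hst : HasStrictFDerivAt Φ (fderiv ℂ Φ (z, w)) (z, w) := han.hasStrictFDerivAt
  have hpart : HasFDerivAt (fun v => Φ (z, v)) (fderiv ℂ Φ (z, w) ∘L .inr ℂ ℂ ℂ) w :=
    hst.hasFDerivAt.comp w (hasFDerivAt_prodMk_right z w)
  have hder : HasDerivAt (subf μ ν z) ((fderiv ℂ Φ (z, w) ∘L .inr ℂ ℂ ℂ) 1 + 1) w := by
    have := hpart.hasDerivAt.add (hasDerivAt_id w)
    refine this.congr_of_eventuallyEq (Eventually.of_forall fun v => ?_)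
    simp [Φ]
  have hne1 := deriv_ne_one (subf_diff μ ν hz) hz (subf_im μ ν hz) hw (omegaFix_fix μ ν hz) hder
  set L := fderiv ℂ Φ (z, w) ∘L .inr ℂ ℂ ℂ with hL
  have hL1 : L 1 ≠ 0 := fun h => hne1 (by rw [h, zero_add])
  have hinv : L.IsInvertible := by
    refine ⟨ContinuousLinearEquiv.unitsEquivAut ℂ (Units.mk0 _ hL1), ?_⟩
    ext
    simp
  have hψd := (hst.hasStrictFDerivAt_implicitFunctionOfProdDomain hinv).hasFDerivAt.differentiableAt
  have hψt := hst.tendsto_implicitFunctionOfProdDomain hinv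
  have hψe := hst.eventually_apply_implicitFunctionOfProdDomain hinv
  refine hψd.congr_of_eventuallyEq ?_
  filter_upwards [hψe, hψt.eventually (UHP_isOpen.mem_nhds hw), UHP_isOpen.mem_nhds hz]
    with x hx hxU hxz
  refine omegaFix_unique μ ν hxz hxU ?_
  have h0 : Φ (z, w) = 0 := sub_eq_zero.2 (omegaFix_fix μ ν hz)
  rw [h0] at hx
  exact sub_eq_zero.1 hx

/-- `ω(iy)/(iy) → 1`. -/
lemma omegaFix_asymp :
    Tendsto (fun y : ℝ => omegaFix μ ν (Complex.I * y) / (Complex.I * y)) atTop (𝓝 1) := by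
  let i : ℝ → ℂ := fun y => Complex.I * y
  let q : ℝ → ℂ := fun y => subf μ ν (i y) (i y) / i y
  have hq : Tendsto q atTop (𝓝 1) := by
    refine subf_asymp μ ν tendsto_Iy_div_Iy ?_
    refine (Fmeas_asymp μ tendsto_Iy_div_Iy).congr fun y => ?_
    congr 1
    ring
  let r : ℝ → ℂ := fun y => omegaFix μ ν (i y) / i y
  have hq1 : Tendsto (fun y => ‖q y - 1‖) atTop (𝓝 0) := by
    have := (hq.sub_const 1).norm
    simpa using this
  -- the main estimate
  have hmain : ∀ᶠ y : ℝ in atTop, ‖r y - 1‖ ≤ 2 * ‖q y - 1‖ := by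
    filter_upwards [eventually_gt_atTop 0, hq1.eventually_lt_const (show (0:ℝ) < 1 / 4 by norm_num)]
      with y hy hsm
    have hi : i y ∈ UHP := by simpa [i, UHP] using hy
    have hiim : (i y).im = y := by simp [i]
    have hni : ‖i y‖ = y := by simp [i, abs_of_pos hy]
    have hi0 : i y ≠ 0 := by simp [i, hy.ne']
    set w := omegaFix μ ν (i y) with hw
    have hwU : w ∈ UHP := omegaFix_mem μ ν hi
    have hwi : 0 < w.im := hwU
    have hfix : subf μ ν (i y) w = w := omegaFix_fix μ ν hi
    have h := sp (subf_diff μ ν hi) (subf_im μ ν hi) hi hwU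
    have hwy : y ≤ w.im := by
      have := subf_im μ ν hi w hwU
      rw [hfix, hiim] at this
      exact this
    set p := subf μ ν (i y) (i y) with hp
    have hpq : p = q y * i y := by
      simp only [q]
      rw [div_mul_cancel₀ _ hi0]
    have hpi : 0 ≤ p.im - y := by
      have := subf_im μ ν hi (i y) hi
      rw [hiim] at this
      linarith
    rw [hfix, hiim] at h
    have hpsub : ‖p - i y‖ = ‖q y - 1‖ * y := by
      rw [hpq, ← hni, ← norm_mul, hni]
      congr 1
      ring
    have hpim : p.im - y ≤ y / 4 := by
      have h1 := (le_abs_self _).trans (Complex.abs_im_le_norm (p - i y))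
      rw [hpsub, Complex.sub_im, hiim] at h1
      nlinarith
    have h2 : ‖p - w‖ ^ 2 * y ≤ ‖i y - w‖ ^ 2 * (y / 4) := by
      refine le_of_mul_le_mul_right ?_ hwi
      calc _ = ‖p - w‖ ^ 2 * (y * w.im) := by ring
        _ ≤ ‖i y - w‖ ^ 2 * ((p.im - y) * (w.im - y)) := h
        _ ≤ ‖i y - w‖ ^ 2 * ((y / 4) * w.im) := by
          gcongr
          linarith
        _ = _ := by ring
    have h3 : ‖p - w‖ ≤ ‖i y - w‖ / 2 := by
      have : ‖p - w‖ ^ 2 ≤ (‖i y - w‖ / 2) ^ 2 := by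
        refine le_of_mul_le_mul_right ?_ hy
        calc _ ≤ _ := h2
          _ = _ := by ring
      exact le_of_sq_le_sq this (by positivity)
    have h4 : ‖i y - w‖ ≤ ‖p - i y‖ + ‖p - w‖ := by
      have := norm_sub_le (p - w) (p - i y)
      rw [show p - w - (p - i y) = i y - w by ring] at this
      linarith
    have h5 : ‖i y - w‖ ≤ 2 * (‖q y - 1‖ * y) := by linarith
    have h6 : ‖r y - 1‖ * y = ‖i y - w‖ := by
      rw [norm_sub_rev (i y), ← hni, ← norm_mul, hni]
      congr 1
      simp only [r]
      rw [sub_mul, div_mul_cancel₀ _ hi0, one_mul]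
    refine le_of_mul_le_mul_right ?_ hy
    rw [h6]
    linarith
  have hr : Tendsto (fun y => r y - 1) atTop (𝓝 0) := by
    refine squeeze_zero_norm' hmain ?_
    simpa using hq1.const_mul 2
  have := hr.add_const 1
  simpa [r, i] using this

end Subordination

section Herglotz

/-- The unit circle as a compact subtype of the plane. -/
abbrev UCirc : Type := Metric.sphere (0 : ℂ) 1

/-- The parametrization of the unit circle by the angle. -/
noncomputable def ucirc (θ : ℝ) : UCirc := ⟨circleMap 0 1 θ, circleMap_mem_sphere 0 zero_le_one θ⟩

theorem ucirc_cont : Continuous ucirc := by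
  unfold ucirc
  exact Continuous.subtype_mk (continuous_circleMap 0 1) _

theorem poisson_cont {w : ℂ} (hw : w ∈ Metric.ball (0 : ℂ) 1) :
    Continuous (fun ζ : UCirc => poissonKernel 0 w ζ) := by
  unfold poissonKernel
  refine Continuous.div (by fun_prop) (by fun_prop) ?_
  intro ζ h
  have h1 : ‖(ζ : ℂ) - w‖ = 0 := by simpa using h
  have h2 : (ζ : ℂ) = w := by simpa [sub_eq_zero] using h1
  have h3 := ζ.2
  simp only [mem_sphere_iff_norm, sub_zero] at h3
  simp only [Metric.mem_ball, dist_zero_right] at hw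
  rw [h2] at h3
  linarith

theorem circ_im {f : ℂ → ℂ} (hf : DiffContOnCl ℂ f (Metric.ball 0 1)) {w : ℂ}
    (hw : w ∈ Metric.ball (0 : ℂ) 1) :
    (2 * Real.pi)⁻¹ * ∫ θ in Ioc 0 (2 * Real.pi),
      poissonKernel 0 w (circleMap 0 1 θ) * (f (circleMap 0 1 θ)).im = (f w).im := by
  have h := hf.circleAverage_poissonKernel_smul hw
  have hfc : Continuous (fun θ : ℝ => f (circleMap 0 1 θ)) := by
    refine hf.continuousOn.comp_continuous (continuous_circleMap 0 1) ?_
    intro θ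
    rw [closure_ball _ one_ne_zero]
    exact Metric.sphere_subset_closedBall (circleMap_mem_sphere 0 zero_le_one θ)
  have hpc : Continuous (fun θ : ℝ => poissonKernel 0 w (circleMap 0 1 θ)) := by
    have h1 := Continuous.comp (g := fun ζ : UCirc => poissonKernel 0 w ζ) (poisson_cont hw) ucirc_cont
    simpa only [Function.comp_def, ucirc] using h1
  rw [← h, Real.circleAverage_def, Complex.smul_im, smul_eq_mul,
    ← intervalIntegral.integral_of_le Real.two_pi_pos.le]
  congr 1
  have hc : Continuous (fun θ : ℝ => (poissonKernel 0 w • f) (circleMap 0 1 θ)) := by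
    simp only [Pi.smul_apply']
    exact Continuous.smul hpc hfc
  have := Complex.imCLM.intervalIntegral_comp_comm (hc.intervalIntegrable (μ := volume) 0 (2 * Real.pi))
  simp only [Complex.imCLM_apply] at this
  rw [← this]
  congr 1
  ext θ
  simp

theorem disc_approx {f : ℂ → ℂ} (hf : DiffContOnCl ℂ f (Metric.ball 0 1))
    (hpos : ∀ ζ ∈ Metric.closedBall (0 : ℂ) 1, 0 < (f ζ).im) :
    ∃ σ : ProbabilityMeasure UCirc, ∀ w ∈ Metric.ball (0 : ℂ) 1,
      (f w).im = (f 0).im * ∫ ζ : UCirc, poissonKernel 0 w ζ ∂(σ : Measure UCirc) := by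
  have h0m : (0 : ℂ) ∈ Metric.ball (0 : ℂ) 1 := by simp
  have h0 : 0 < (f 0).im := hpos 0 (by simp)
  have hfc : Continuous (fun θ : ℝ => f (circleMap 0 1 θ)) := by
    refine hf.continuousOn.comp_continuous (continuous_circleMap 0 1) ?_
    intro θ
    rw [closure_ball _ one_ne_zero]
    exact Metric.sphere_subset_closedBall (circleMap_mem_sphere 0 zero_le_one θ)
  set d : ℝ → ℝ := fun θ => (f (circleMap 0 1 θ)).im * ((2 * Real.pi)⁻¹ * ((f 0).im)⁻¹) with hd
  have hdc : Continuous d := (Complex.continuous_im.comp hfc).mul continuous_const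
  have hd0 : ∀ θ, 0 ≤ d θ := by
    intro θ
    have := hpos (circleMap 0 1 θ)
      (Metric.sphere_subset_closedBall (circleMap_mem_sphere 0 zero_le_one θ))
    have := Real.pi_pos
    simp only [hd]
    positivity
  set m : Measure ℝ := (volume.restrict (Ioc 0 (2 * Real.pi))).withDensity
    (fun θ => ENNReal.ofReal (d θ)) with hm
  have key : ∀ g : UCirc → ℝ, Continuous g → ∫ ζ, g ζ ∂(m.map ucirc) =
      ∫ θ in Ioc 0 (2 * Real.pi), d θ * g (ucirc θ) := by
    intro g hg
    rw [integral_map ucirc_cont.aemeasurable hg.aestronglyMeasurable, hm,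
      integral_withDensity_eq_integral_toReal_smul hdc.measurable.ennreal_ofReal (by simp)]
    simp [ENNReal.toReal_ofReal (hd0 _)]
  have key2 : ∀ w ∈ Metric.ball (0 : ℂ) 1,
      ∫ θ in Ioc 0 (2 * Real.pi), d θ * poissonKernel 0 w (ucirc θ) = (f w).im / (f 0).im := by
    intro w hw
    rw [← circ_im hf hw, mul_div_right_comm, mul_comm, div_eq_mul_inv, mul_comm,
      ← integral_const_mul]
    · congr 1
      ext θ
      simp only [hd, ucirc]
      ring
  have hmass : m univ = 1 := by
    have h1 := key2 0 h0m
    have h2 : ∀ θ, poissonKernel 0 0 (ucirc θ) = 1 := by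
      intro θ
      simp [poissonKernel, ucirc]
    simp only [h2, mul_one] at h1
    rw [div_self h0.ne'] at h1
    rw [hm, withDensity_apply _ MeasurableSet.univ, Measure.restrict_univ,
      ← ofReal_integral_eq_lintegral_ofReal, h1, ENNReal.ofReal_one]
    · exact (hdc.integrableOn_Icc (a := 0) (b := 2 * Real.pi)).mono_set Ioc_subset_Icc_self
    · exact Eventually.of_forall hd0
  have : IsProbabilityMeasure m := ⟨hmass⟩
  have : IsProbabilityMeasure (m.map ucirc) :=
    Measure.isProbabilityMeasure_map ucirc_cont.aemeasurable
  refine ⟨⟨m.map ucirc, inferInstance⟩, ?_⟩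
  intro w hw
  change _ = _ * ∫ ζ : UCirc, poissonKernel 0 w ζ ∂(m.map ucirc)
  rw [key _ (poisson_cont hw), key2 w hw]
  field_simp

theorem disc_herglotz {f : ℂ → ℂ} (hf : DifferentiableOn ℂ f (Metric.ball 0 1))
    (hpos : ∀ ζ ∈ Metric.ball (0 : ℂ) 1, 0 < (f ζ).im) :
    ∃ σ : ProbabilityMeasure UCirc, ∀ w ∈ Metric.ball (0 : ℂ) 1,
      (f w).im = (f 0).im * ∫ ζ : UCirc, poissonKernel 0 w ζ ∂(σ : Measure UCirc) := by
  have hr : ∀ n : ℕ, ∃ σ : ProbabilityMeasure UCirc, ∀ w ∈ Metric.ball (0 : ℂ) 1,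
      (f (((1 - 1 / ((n : ℝ) + 1) : ℝ) : ℂ) * w)).im =
        (f 0).im * ∫ ζ : UCirc, poissonKernel 0 w ζ ∂(σ : Measure UCirc) := by
    intro n
    set r : ℝ := 1 - 1 / ((n : ℝ) + 1) with hr
    have hr0 : 0 ≤ r := by
      have : 1 / ((n : ℝ) + 1) ≤ 1 := by
        rw [div_le_one (by positivity)]
        linarith [Nat.cast_nonneg (α := ℝ) n]
      linarith
    have hr1 : r < 1 := by
      have : 0 < 1 / ((n : ℝ) + 1) := by positivity
      linarith
    have hmaps : ∀ ζ ∈ Metric.closedBall (0 : ℂ) 1, (r : ℂ) * ζ ∈ Metric.ball (0 : ℂ) 1 := by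
      intro ζ hζ
      simp only [Metric.mem_closedBall, dist_zero_right] at hζ
      simp only [Metric.mem_ball, dist_zero_right, norm_mul, Complex.norm_real, Real.norm_eq_abs,
        abs_of_nonneg hr0]
      nlinarith [norm_nonneg ζ]
    have hd : DifferentiableOn ℂ (fun ζ => f ((r : ℂ) * ζ)) (Metric.closedBall 0 1) :=
      hf.comp (by fun_prop) hmaps
    obtain ⟨σ, hσ⟩ := disc_approx (f := fun ζ => f ((r : ℂ) * ζ))
      (hd.diffContOnCl_ball subset_rfl)
      (fun ζ hζ => hpos _ (hmaps ζ hζ))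
    refine ⟨σ, fun w hw => ?_⟩
    simpa using hσ w hw
  choose s hs using hr
  set U : Ultrafilter ℕ := Ultrafilter.of atTop with hU
  have hUle : (U : Filter ℕ) ≤ atTop := Ultrafilter.of_le _
  have hlim : Tendsto s U (𝓝 (U.map s).lim) := (U.map s).le_nhds_lim
  refine ⟨(U.map s).lim, fun w hw => ?_⟩
  have h1 := (ProbabilityMeasure.tendsto_iff_forall_integral_tendsto.1 hlim)
    (BoundedContinuousFunction.mkOfCompact ⟨_, poisson_cont hw⟩)
  have h2 := h1.const_mul (f 0).im
  simp only [BoundedContinuousFunction.mkOfCompact_apply, ContinuousMap.coe_mk] at h2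
  refine tendsto_nhds_unique ?_ h2
  have h3 : Tendsto (fun n : ℕ => (f (((1 - 1 / ((n : ℝ) + 1) : ℝ) : ℂ) * w)).im) U
      (𝓝 (f w).im) := by
    refine Tendsto.mono_left ?_ hUle
    have hc : ContinuousAt (fun ζ => (f ζ).im) w :=
      Complex.continuous_im.continuousAt.comp
        ((hf.differentiableAt (Metric.isOpen_ball.mem_nhds hw)).continuousAt)
    refine hc.tendsto.comp ?_
    have h4 : Tendsto (fun n : ℕ => (1 - 1 / ((n : ℝ) + 1) : ℝ)) atTop (𝓝 1) := by
      simpa using (tendsto_one_div_add_atTop_nhds_zero_nat (𝕜 := ℝ)).const_sub 1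
    have h5 := ((Complex.continuous_ofReal.tendsto 1).comp h4).mul_const w
    simpa using h5
  refine h3.congr fun n => ?_
  rw [hs n w hw]

end Herglotz

section HalfPlane

/-- The inverse Cayley transform of a boundary point. -/
noncomputable def Tc (ζ : UCirc) : ℝ := (I * (1 + (ζ : ℂ)) / (1 - (ζ : ℂ))).re

/-- The Cayley transform. -/
noncomputable def cay (z : ℂ) : ℂ := (z - I) / (z + I)

theorem Tc_meas : Measurable Tc := by
  unfold Tc
  fun_prop

theorem shiftI_ne {z : ℂ} (hz : z ∈ UHP) : z + I ≠ 0 := by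
  have := sub_conj_ne (mem_UHP.1 hz) (b := I) (by simp)
  simpa using this

theorem cay_mem {z : ℂ} (hz : z ∈ UHP) : cay z ∈ Metric.ball (0 : ℂ) 1 := by
  have := cayley_lt (mem_UHP.1 hz) (b := I) (by simp)
  simpa [cay] using this

theorem ofReal_shiftI_ne (t : ℝ) : (t : ℂ) + I ≠ 0 := by
  intro h
  have := congrArg Complex.im h
  simp at this

theorem ucirc_eq {ζ : UCirc} (h1 : (ζ : ℂ) ≠ 1) : (ζ : ℂ) = ((Tc ζ : ℂ) - I) / ((Tc ζ : ℂ) + I) := by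
  have hn : ‖(ζ : ℂ)‖ = 1 := by simpa using ζ.2
  have h0 : (ζ : ℂ) ≠ 0 := by
    intro h
    rw [h] at hn
    simp at hn
  have h2 : 1 - (ζ : ℂ) ≠ 0 := sub_ne_zero.2 (Ne.symm h1)
  have h3 : (ζ : ℂ) - 1 ≠ 0 := sub_ne_zero.2 h1
  have hT : (Tc ζ : ℂ) = I * (1 + (ζ : ℂ)) / (1 - (ζ : ℂ)) := by
    unfold Tc
    refine Complex.conj_eq_iff_re.1 ?_
    have hc : (starRingEnd ℂ) (ζ : ℂ) = (ζ : ℂ)⁻¹ := (Complex.inv_eq_conj hn).symm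
    simp only [map_div₀, map_mul, map_add, map_sub, map_one, Complex.conj_I, hc]
    have h4 : 1 - (ζ : ℂ)⁻¹ ≠ 0 := by
      intro h
      apply h2
      have : (ζ : ℂ)⁻¹ = 1 := by linear_combination -h
      rw [inv_eq_one.1 this]
      ring
    rw [div_eq_div_iff h4 h2]
    field_simp
    ring
  rw [eq_div_iff (ofReal_shiftI_ne _), hT]
  field_simp
  ring

theorem one_sub_cay {z : ℂ} (hz : z ∈ UHP) : 1 - ‖cay z‖ ^ 2 = 4 * z.im / ‖z + I‖ ^ 2 := by
  have h := normSq_sub_conj z I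
  simp only [Complex.conj_I, sub_neg_eq_add, Complex.I_im, mul_one] at h
  have h0 : ‖z + I‖ ≠ 0 := norm_ne_zero_iff.2 (shiftI_ne hz)
  rw [cay, norm_div, div_pow, eq_div_iff (by positivity)]
  field_simp
  linarith

theorem pker_one {z : ℂ} (hz : z ∈ UHP) {ζ : UCirc} (h1 : (ζ : ℂ) = 1) :
    poissonKernel 0 (cay z) ζ = z.im := by
  have h0 : ‖z + I‖ ≠ 0 := norm_ne_zero_iff.2 (shiftI_ne hz)
  have h2 : (1 : ℂ) - cay z = 2 * I / (z + I) := by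
    have := shiftI_ne hz
    unfold cay
    field_simp
    ring
  simp only [poissonKernel, sub_zero, h1, norm_one, one_pow, h2]
  rw [one_sub_cay hz, norm_div]
  simp
  field_simp
  ring

theorem pker_ne {z : ℂ} (hz : z ∈ UHP) {ζ : UCirc} (h1 : (ζ : ℂ) ≠ 1) :
    poissonKernel 0 (cay z) ζ = (1 + (Tc ζ) ^ 2) * (z.im * ‖(z - (Tc ζ : ℂ))⁻¹‖ ^ 2) := by
  have hn : ‖(ζ : ℂ)‖ = 1 := by simpa using ζ.2
  have h0 : ‖z + I‖ ≠ 0 := norm_ne_zero_iff.2 (shiftI_ne hz)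
  have hT0 : ‖(Tc ζ : ℂ) + I‖ ≠ 0 := norm_ne_zero_iff.2 (ofReal_shiftI_ne _)
  have hz0 : ‖z - (Tc ζ : ℂ)‖ ≠ 0 := norm_ne_zero_iff.2 (sub_ofReal_ne hz _)
  have h2 : (ζ : ℂ) - cay z = 2 * I * (-(z - (Tc ζ : ℂ))) / (((Tc ζ : ℂ) + I) * (z + I)) := by
    have := shiftI_ne hz
    have := ofReal_shiftI_ne (Tc ζ)
    conv_lhs => rw [ucirc_eq h1]
    unfold cay
    field_simp
    ring
  have h3 : 1 + (Tc ζ) ^ 2 = ‖(Tc ζ : ℂ) + I‖ ^ 2 := by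
    rw [← Complex.normSq_eq_norm_sq, Complex.normSq_apply]
    simp
    ring
  simp only [poissonKernel, sub_zero, hn, one_pow]
  rw [one_sub_cay hz, h2, h3, norm_div, norm_mul, norm_mul, norm_mul, norm_neg, norm_inv]
  simp only [Complex.norm_I, Complex.norm_ofNat]
  field_simp
  ring

/-- Poisson representation on the half plane. -/
theorem half_herglotz {N : ℂ → ℂ} (hN : DifferentiableOn ℂ N UHP) (hm : MapsTo N UHP UHP) :
    ∃ σ : ProbabilityMeasure UCirc, ∀ z ∈ UHP,
      (N z).im = (N I).im * ∫ ζ : UCirc, poissonKernel 0 (cay z) ζ ∂(σ : Measure UCirc) := by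
  set φ : ℂ → ℂ := fun ζ => (I - (starRingEnd ℂ) I * ζ) / (1 - ζ) with hφ
  have hφm : MapsTo φ (Metric.ball 0 1) UHP := by
    intro ζ hζ
    exact invcayley_im (by simpa using hζ) (by simp)
  have hne : ∀ ζ ∈ Metric.ball (0 : ℂ) 1, 1 - ζ ≠ 0 := by
    intro ζ hζ h
    have : ζ = 1 := by linear_combination -h
    rw [this] at hζ
    simp at hζ
  have hφd : DifferentiableOn ℂ φ (Metric.ball 0 1) :=
    DifferentiableOn.div (by fun_prop) (by fun_prop) hne
  obtain ⟨σ, hσ⟩ := disc_herglotz (f := fun ζ => N (φ ζ)) (hN.comp hφd hφm)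
    (fun ζ hζ => hm (hφm hζ))
  refine ⟨σ, fun z hz => ?_⟩
  have h1 := hσ (cay z) (cay_mem hz)
  have h2 : φ (cay z) = z := by
    have h3 := shiftI_ne hz
    have h4 := hne _ (cay_mem hz)
    simp only [hφ]
    rw [div_eq_iff h4]
    unfold cay
    simp only [Complex.conj_I]
    field_simp
    ring
  have h3 : φ 0 = I := by simp [hφ]
  simpa only [h2, h3] using h1

theorem Iy_mem {y : ℝ} (hy : 0 < y) : I * (y : ℂ) ∈ UHP := by
  simp [mem_UHP, hy]

theorem Iy_norm (y t : ℝ) : ‖(I * (y : ℂ) - (t : ℂ))⁻¹‖ ^ 2 = 1 / (t ^ 2 + y ^ 2) := by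
  rw [norm_inv, inv_pow, ← Complex.normSq_eq_norm_sq, Complex.normSq_apply]
  simp
  ring

theorem ratio_lim (t : ℝ) :
    Tendsto (fun n : ℕ => (n : ℝ) * ((1 + t ^ 2) * ((n : ℝ) * (1 / (t ^ 2 + (n : ℝ) ^ 2)))))
      atTop (𝓝 (1 + t ^ 2)) := by
  have h1 : Tendsto (fun n : ℕ => t ^ 2 / (n : ℝ) ^ 2) atTop (𝓝 0) :=
    tendsto_const_nhds.div_atTop
      ((tendsto_pow_atTop two_ne_zero).comp tendsto_natCast_atTop_atTop)
  have h2 : Tendsto (fun n : ℕ => (1 + t ^ 2) / (t ^ 2 / (n : ℝ) ^ 2 + 1)) atTop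
      (𝓝 ((1 + t ^ 2) / (0 + 1))) :=
    tendsto_const_nhds.div (h1.add_const 1) (by norm_num)
  rw [zero_add, div_one] at h2
  refine h2.congr' ?_
  filter_upwards [eventually_gt_atTop 0] with n hn
  have : (0 : ℝ) < n := by exact_mod_cast hn
  field_simp

theorem herglotz_rep {N : ℂ → ℂ} (hN : DifferentiableOn ℂ N UHP) (hm : MapsTo N UHP UHP)
    (hlim : Tendsto (fun y : ℝ => I * y * N (I * y)) atTop (𝓝 (-1))) :
    ∃ lam : Measure ℝ, IsProbabilityMeasure lam ∧
      ∀ z ∈ UHP, (N z).im = z.im * ∫ t, ‖(z - (t : ℂ))⁻¹‖ ^ 2 ∂lam := by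
  obtain ⟨σ, hσ⟩ := half_herglotz hN hm
  set u : ℝ := (N I).im with hu
  have hu0 : 0 < u := hm (by simp [mem_UHP])
  have hlimR : Tendsto (fun y : ℝ => y * (N (I * y)).im) atTop (𝓝 1) := by
    have h1 := ((Complex.continuous_re.tendsto _).comp hlim).neg
    simp only [Function.comp_def, Complex.neg_re, Complex.one_re, neg_neg] at h1
    refine h1.congr fun y => ?_
    simp [Complex.mul_re]
  have hlimN : Tendsto (fun n : ℕ => (n : ℝ) * (N (I * ((n : ℝ) : ℂ))).im) atTop (𝓝 1) :=
    hlimR.comp tendsto_natCast_atTop_atTop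
  -- the Fatou step
  let K : ℕ → UCirc → ENNReal := fun n ζ =>
    ENNReal.ofReal (u * ((n : ℝ) * poissonKernel 0 (cay (I * ((n : ℝ) : ℂ))) ζ))
  let L : UCirc → ENNReal := fun ζ => if (ζ : ℂ) = 1 then ⊤ else ENNReal.ofReal (u * (1 + Tc ζ ^ 2))
  have hLmeas : Measurable L := by
    refine Measurable.ite ?_ measurable_const ?_
    · exact measurableSet_eq_fun measurable_subtype_coe measurable_const
    · exact (((Tc_meas.pow_const 2).const_add 1).const_mul u).ennreal_ofReal
  have hKL : ∀ ζ, Tendsto (fun n => K n ζ) atTop (𝓝 (L ζ)) := by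
    intro ζ
    by_cases h1 : (ζ : ℂ) = 1
    · simp only [L, h1, if_true]
      have h2 : Tendsto (fun n : ℕ => u * ((n : ℝ) * (n : ℝ))) atTop atTop :=
        (tendsto_natCast_atTop_atTop.atTop_mul_atTop₀
          tendsto_natCast_atTop_atTop).const_mul_atTop hu0
      refine (ENNReal.tendsto_ofReal_atTop.comp h2).congr' ?_
      filter_upwards [eventually_gt_atTop 0] with n hn
      have hn' : (0 : ℝ) < n := by exact_mod_cast hn
      simp only [Function.comp_def, K]
      rw [pker_one (Iy_mem hn') h1]
      simp
    · simp only [L, h1, if_false]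
      refine (ENNReal.continuous_ofReal.tendsto _).comp (((ratio_lim (Tc ζ)).const_mul u).congr' ?_)
      filter_upwards [eventually_gt_atTop 0] with n hn
      have hn' : (0 : ℝ) < n := by exact_mod_cast hn
      rw [pker_ne (Iy_mem hn') h1, Iy_norm]
      simp
  have hKint : ∀ n : ℕ, 0 < n → ∫⁻ ζ, K n ζ ∂(σ : Measure UCirc) =
      ENNReal.ofReal ((n : ℝ) * (N (I * ((n : ℝ) : ℂ))).im) := by
    intro n hn
    have hn' : (0 : ℝ) < n := by exact_mod_cast hn
    have hc : Continuous (fun ζ : UCirc =>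
        u * ((n : ℝ) * poissonKernel 0 (cay (I * ((n : ℝ) : ℂ))) ζ)) :=
      ((poisson_cont (cay_mem (Iy_mem hn'))).const_mul _).const_mul _
    simp only [K]
    rw [← ofReal_integral_eq_lintegral_ofReal]
    · rw [hσ _ (Iy_mem hn'), integral_const_mul, integral_const_mul]
      congr 1
      ring
    · exact hc.integrable_of_hasCompactSupport (HasCompactSupport.of_compactSpace _)
    · refine Eventually.of_forall fun ζ => ?_
      have hz := Iy_mem hn'
      have hzi : 0 < (I * ((n : ℝ) : ℂ)).im := hz
      have : 0 ≤ poissonKernel 0 (cay (I * ((n : ℝ) : ℂ))) ζ := by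
        by_cases h1 : (ζ : ℂ) = 1
        · rw [pker_one hz h1]
          exact hzi.le
        · rw [pker_ne hz h1]
          positivity
      simp only [Pi.zero_apply]
      positivity
  have hKmeas : ∀ n, Measurable (K n) := by
    intro n
    simp only [K, poissonKernel]
    fun_prop
  have hfatou : ∫⁻ ζ, L ζ ∂(σ : Measure UCirc) ≤ 1 := by
    have h1 := lintegral_liminf_le (μ := (σ : Measure UCirc)) (u := atTop) hKmeas
    have h2 : ∀ ζ, liminf (fun n => K n ζ) atTop = L ζ := fun ζ => (hKL ζ).liminf_eq
    simp only [h2] at h1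
    have h3 : Tendsto (fun n => ∫⁻ ζ, K n ζ ∂(σ : Measure UCirc)) atTop (𝓝 1) := by
      have h4 := (ENNReal.continuous_ofReal.tendsto _).comp hlimN
      rw [ENNReal.ofReal_one] at h4
      refine h4.congr' ?_
      filter_upwards [eventually_gt_atTop 0] with n hn
      rw [hKint n hn]
      rfl
    rwa [h3.liminf_eq] at h1
  have hae : ∀ᵐ ζ ∂(σ : Measure UCirc), ((ζ : UCirc) : ℂ) ≠ 1 := by
    have h1 := ae_lt_top hLmeas (ne_top_of_le_ne_top ENNReal.one_ne_top hfatou)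
    filter_upwards [h1] with ζ hζ h
    simp [L, h] at hζ
  -- the measure
  set m : Measure UCirc := (σ : Measure UCirc).withDensity
    (fun ζ => ENNReal.ofReal (u * (1 + Tc ζ ^ 2))) with hmdef
  have hdm : Measurable (fun ζ => ENNReal.ofReal (u * (1 + Tc ζ ^ 2))) :=
    (((Tc_meas.pow_const 2).const_add 1).const_mul u).ennreal_ofReal
  have hmass : m univ ≤ 1 := by
    rw [hmdef, withDensity_apply _ MeasurableSet.univ, Measure.restrict_univ]
    refine le_trans (lintegral_mono fun ζ => ?_) hfatou
    simp only [L]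
    split_ifs
    · exact le_top
    · exact le_rfl
  have hfin : IsFiniteMeasure m := ⟨lt_of_le_of_lt hmass ENNReal.one_lt_top⟩
  set lam : Measure ℝ := m.map Tc with hlam
  have hfin2 : IsFiniteMeasure lam := Measure.isFiniteMeasure_map m Tc
  have hmass2 : lam univ = m univ := by
    rw [hlam, Measure.map_apply Tc_meas MeasurableSet.univ, preimage_univ]
  have hIntN : ∀ z ∈ UHP, (N z).im = z.im * ∫ t, ‖(z - (t : ℂ))⁻¹‖ ^ 2 ∂lam := by
    intro z hz
    have hmeas : Measurable (fun t : ℝ => ‖(z - (t : ℂ))⁻¹‖ ^ 2) := by fun_prop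
    rw [hlam, integral_map Tc_meas.aemeasurable hmeas.aestronglyMeasurable, hmdef,
      integral_withDensity_eq_integral_toReal_smul hdm (by simp), hσ z hz,
      ← integral_const_mul, ← integral_const_mul]
    refine integral_congr_ae ?_
    filter_upwards [hae] with ζ hζ
    rw [pker_ne hz hζ, ENNReal.toReal_ofReal (by positivity), smul_eq_mul]
    ring
  have hge : 1 ≤ lam.real univ := by
    refine le_of_tendsto hlimR ?_
    filter_upwards [eventually_gt_atTop 0] with y hy
    rw [hIntN _ (Iy_mem hy)]
    have h1 : y * ((I * (y : ℂ)).im * ∫ t : ℝ, ‖(I * (y : ℂ) - (t : ℂ))⁻¹‖ ^ 2 ∂lam) =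
        ∫ t : ℝ, y ^ 2 * (1 / (t ^ 2 + y ^ 2)) ∂lam := by
      simp only [Iy_norm]
      rw [integral_const_mul]
      simp
      ring
    rw [h1]
    have h2 : ∫ t : ℝ, (1 : ℝ) ∂lam = lam.real univ := by simp
    rw [← h2]
    have hb : ∀ t : ℝ, y ^ 2 * (1 / (t ^ 2 + y ^ 2)) ≤ 1 := by
      intro t
      rw [mul_one_div, div_le_one (by positivity)]
      nlinarith [sq_nonneg t]
    refine integral_mono_of_nonneg (Eventually.of_forall fun t => ?_) (integrable_const _)
      (Eventually.of_forall hb)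
    simp only [Pi.zero_apply]
    positivity
  refine ⟨lam, ⟨le_antisymm (hmass2 ▸ hmass) ?_⟩, hIntN⟩
  rw [measureReal_def] at hge
  have := ENNReal.ofReal_le_ofReal hge
  rwa [ENNReal.ofReal_one, ENNReal.ofReal_toReal (measure_ne_top _ _)] at this

theorem cauchy_rep {N : ℂ → ℂ} (hN : DifferentiableOn ℂ N UHP) (hm : MapsTo N UHP UHP)
    (hlim : Tendsto (fun y : ℝ => I * y * N (I * y)) atTop (𝓝 (-1))) :
    ∃ lam : Measure ℝ, IsProbabilityMeasure lam ∧ ∀ z ∈ UHP, cauchyT lam z = - N z := by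
  obtain ⟨lam, hp, h⟩ := herglotz_rep hN hm hlim
  refine ⟨lam, hp, ?_⟩
  have hd : DifferentiableOn ℂ (fun z => N z + cauchyT lam z) UHP := hN.add (cauchyT_diff lam)
  have hconn : IsConnected UHP := by
    refine ⟨⟨I, by simp [mem_UHP]⟩, ?_⟩
    exact (convex_halfSpace_im_gt 0).isPreconnected
  obtain ⟨c, hc⟩ := AnalyticOnNhd.eq_const_of_im_eq_const (c₀ := 0)
    (hd.analyticOnNhd UHP_isOpen) (fun z hz => by
      rw [Complex.add_im, cauchyT_im lam hz, h z hz]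
      ring) UHP_isOpen hconn
  have h1 := (Fmeas_asymp lam tendsto_Iy_div_Iy).inv₀ one_ne_zero
  have h2 := hlim.add h1
  have h3 := h2.mul (tendsto_const_div_Iy 1)
  have h4 : c = 0 := by
    rw [mul_zero] at h3
    refine tendsto_nhds_unique (tendsto_const_nhds.congr' ?_) h3
    filter_upwards [eventually_gt_atTop 0] with y hy
    rw [← hc _ (Iy_mem hy), Fmeas]
    have : (y : ℂ) ≠ 0 := by exact_mod_cast hy.ne'
    have hI := Complex.I_ne_zero
    have := cauchyT_ne lam (Iy_mem hy)
    field_simp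
  intro z hz
  have := hc z hz
  rw [h4] at this
  linear_combination this

end HalfPlane

/-- Biane's subordination theorem for free additive convolution: for Borel
probability measures `μ, ν` on `ℝ` there are a probability measure `λ`
(`= μ ⊞ ν`) and analytic self-maps `ω₁, ω₂` of `ℂ⁺` such that
`F_λ = F_μ ∘ ω₁ = F_ν ∘ ω₂`, `F_λ(z) + z = ω₁(z) + ω₂(z)` and
`ω_j(iy)/(iy) → 1`; the pair `(ω₁, ω₂)` with
`F_μ(ω₁(z)) = F_ν(ω₂(z)) = ω₁(z) + ω₂(z) − z` is unique. -/
theorem biane_subordination_additive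
    (μ ν : Measure ℝ) [IsProbabilityMeasure μ] [IsProbabilityMeasure ν] :
    ∃ lam : Measure ℝ, IsProbabilityMeasure lam ∧
    ∃ ω₁ ω₂ : ℂ → ℂ,
      DifferentiableOn ℂ ω₁ UHP ∧ Set.MapsTo ω₁ UHP UHP ∧
      DifferentiableOn ℂ ω₂ UHP ∧ Set.MapsTo ω₂ UHP UHP ∧
      (∀ z ∈ UHP, Fmeas lam z = Fmeas μ (ω₁ z) ∧ Fmeas lam z = Fmeas ν (ω₂ z) ∧
        Fmeas lam z + z = ω₁ z + ω₂ z) ∧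
      Tendsto (fun y : ℝ => ω₁ (Complex.I * y) / (Complex.I * y)) atTop (𝓝 1) ∧
      Tendsto (fun y : ℝ => ω₂ (Complex.I * y) / (Complex.I * y)) atTop (𝓝 1) ∧
      (∀ ω₁' ω₂' : ℂ → ℂ,
        DifferentiableOn ℂ ω₁' UHP → Set.MapsTo ω₁' UHP UHP →
        DifferentiableOn ℂ ω₂' UHP → Set.MapsTo ω₂' UHP UHP →
        (∀ z ∈ UHP, Fmeas μ (ω₁' z) = Fmeas ν (ω₂' z) ∧
          Fmeas μ (ω₁' z) = ω₁' z + ω₂' z - z) →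
        Set.EqOn ω₁ ω₁' UHP ∧ Set.EqOn ω₂ ω₂' UHP) := by
  have hd1 : DifferentiableOn ℂ (omegaFix μ ν) UHP := omegaFix_diff μ ν
  have hm1 : MapsTo (omegaFix μ ν) UHP UHP := fun z hz => omegaFix_mem μ ν hz
  have ha1 : Tendsto (fun y : ℝ => omegaFix μ ν (I * y) / (I * y)) atTop (𝓝 1) :=
    omegaFix_asymp μ ν
  have hG : DifferentiableOn ℂ (fun z => cauchyT μ (omegaFix μ ν z)) UHP :=
    (cauchyT_diff μ).comp hd1 hm1
  have hF : DifferentiableOn ℂ (fun z => Fmeas μ (omegaFix μ ν z)) UHP :=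
    (Fmeas_diff μ).comp hd1 hm1
  have haF := Fmeas_asymp μ ha1
  obtain ⟨lam, hp, hlam⟩ := cauchy_rep (N := fun z => -cauchyT μ (omegaFix μ ν z)) hG.neg
    (fun z hz => by
      have := cauchyT_im_neg μ (hm1 hz)
      simpa [mem_UHP] using this)
    (by
      have h1 := (haF.inv₀ one_ne_zero).neg
      rw [inv_one] at h1
      refine h1.congr fun y => ?_
      simp only [Fmeas, inv_div, div_inv_eq_mul]
      ring)
  have hFl : ∀ z ∈ UHP, Fmeas lam z = Fmeas μ (omegaFix μ ν z) := by
    intro z hz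
    rw [Fmeas, hlam z hz, neg_neg, Fmeas]
  have hfix : ∀ z ∈ UHP, Fmeas μ (omegaFix μ ν z) =
      Fmeas ν (z + (Fmeas μ (omegaFix μ ν z) - omegaFix μ ν z)) := by
    intro z hz
    have h1 := omegaFix_fix μ ν hz
    rw [subf] at h1
    linear_combination -h1
  refine ⟨lam, hp, omegaFix μ ν, fun z => z + (Fmeas μ (omegaFix μ ν z) - omegaFix μ ν z),
    hd1, hm1, ?_, ?_, ?_, ha1, ?_, ?_⟩
  · exact differentiableOn_id.add (hF.sub hd1)
  · exact fun z hz => inner_mem μ hz (hm1 hz)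
  · intro z hz
    refine ⟨hFl z hz, (hFl z hz).trans (hfix z hz), ?_⟩
    rw [hFl z hz]
    ring
  · have h1 := tendsto_Iy_div_Iy.add (haF.sub ha1)
    rw [sub_self, add_zero] at h1
    refine h1.congr fun y => ?_
    ring
  · intro w1 w2 _ hw1 _ _ hrel
    have e2 : ∀ z ∈ UHP, w2 z = z + (Fmeas μ (w1 z) - w1 z) := by
      intro z hz
      linear_combination -(hrel z hz).2
    have e1 : ∀ z ∈ UHP, omegaFix μ ν z = w1 z := by
      intro z hz
      refine omegaFix_unique μ ν hz (hw1 hz) ?_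
      rw [subf, ← e2 z hz, ← (hrel z hz).1]
      linear_combination (hrel z hz).2
    refine ⟨e1, fun z hz => ?_⟩
    simp only [e1 z hz, e2 z hz]
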